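/- arXiv:1409.3802 — 3 statements merged into one kernel-verified Lean document; each statement's English description precedes it below -/
import Mathlib

section
/- Let k be an algebraically closed field, n ≥ 1 an integer, R = k[x_0,…,x_n] with the standard grading, and I ⊆ R a homogeneous prime ideal such that the Krull dimension of R/I equals κ+1 for some integer κ ≥ 0. Then for every integer d ≥ 0, the k-vector space dimension of the degree-d graded piece of R/I is at least binom(d+κ, κ); equivalently, the k-subspace of degree-d homogeneous polynomials lying in I has codimension at least binom(d+κ, κ) in the binom(n+d, n)-dimensional space of all degree-d homogeneous polynomials. -/
open MvPolynomial

/-!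
By Noether normalization and incomparability, the Krull dimension of a finitely generated domain
is at most its transcendence degree. Modulo the bottom of a chain of primes of length `κ + 1` in
`R ⧸ I`, the classes of the variables generate a domain of dimension at least `κ + 1`, so some
`κ + 1` of them are algebraically independent there, hence already in `R ⧸ I`. The monomials of
degree `d` in these variables are then linearly independent modulo `I`, and there are
`(d + κ).choose κ` of them.
-/

section KrullDimension

theorem ringKrullDim_le_of_isIntegral (R S : Type*) [CommRing R] [CommRing S] [Algebra R S]
    [Algebra.IsIntegral R S] : ringKrullDim S ≤ ringKrullDim R :=
  Order.krullDim_le_of_strictMono (PrimeSpectrum.comap (algebraMap R S)) fun p q hpq =>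
    Ideal.IsIntegral.comap_lt_comap (R := R) (I := p.asIdeal) (J := q.asIdeal) hpq

theorem ringKrullDim_le_toENat_trdeg (k A : Type*) [Field k] [CommRing A] [IsDomain A]
    [Algebra k A] [Algebra.FiniteType k A] :
    ringKrullDim A ≤ (Cardinal.toENat (Algebra.trdeg k A) : WithBot ℕ∞) := by
  obtain ⟨s, g, g_injective, g_integral⟩ := exists_integral_inj_algHom_of_fg k A
  algebraize [g.toRingHom]
  have dim_le : ringKrullDim A ≤ s := by
    simpa [MvPolynomial.ringKrullDim_of_isNoetherianRing] using
      ringKrullDim_le_of_isIntegral (MvPolynomial (Fin s) k) A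
  have le_trdeg : (s : Cardinal) ≤ Algebra.trdeg k A := by
    simpa using lift_trdeg_le_of_injective g g_injective
  exact dim_le.trans (WithBot.coe_le_coe.mpr (Cardinal.natCast_le_toENat.mpr le_trdeg))

theorem exists_isPrime_le_ringKrullDim_quotient {A : Type*} [CommRing A] {m : ℕ}
    (hm : m ≤ ringKrullDim A) : ∃ P : Ideal A, P.IsPrime ∧ m ≤ ringKrullDim (A ⧸ P) := by
  obtain ⟨chain, rfl⟩ := Order.le_krullDim_iff.mp hm
  refine ⟨chain.head.asIdeal, chain.head.isPrime, ?_⟩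
  rw [ringKrullDim_quotient, Order.le_krullDim_iff]
  exact ⟨⟨chain.length, fun i => ⟨chain i, chain.head_le i⟩, chain.step⟩, rfl⟩

end KrullDimension

section AlgebraicIndependence

variable {σ A : Type*} [CommRing A]

theorem exists_algebraicIndependent_comp_of_le_trdeg {R : Type*} [CommRing R] [Nontrivial R]
    [Algebra R A] [NoZeroDivisors A] [FaithfulSMul R A] (x : σ → A)
    [Algebra.IsAlgebraic (Algebra.adjoin R (Set.range x)) A] {m : ℕ}
    (hm : m ≤ Algebra.trdeg R A) : ∃ j : Fin m → σ, AlgebraicIndependent R (x ∘ j) := by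
  obtain ⟨t, t_subset, t_basis⟩ := exists_isTranscendenceBasis_subset (R := R) (Set.range x)
  have card_le : Cardinal.lift (Cardinal.mk (Fin m)) ≤ Cardinal.lift (Cardinal.mk t) := by
    simpa [t_basis.cardinalMk_eq_trdeg] using hm
  obtain ⟨e⟩ := Cardinal.lift_mk_le'.mp card_le
  choose j hj using fun i => t_subset (e i).2
  have x_comp_j : x ∘ j = (↑) ∘ e := funext hj
  exact ⟨j, x_comp_j ▸ t_basis.1.comp e e.injective⟩

theorem exists_algebraicIndependent_comp_of_le_ringKrullDim {k : Type*} [Field k] [Algebra k A]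
    [Finite σ] {x : σ → A} (hx : Algebra.adjoin k (Set.range x) = ⊤) {m : ℕ}
    (hm : m ≤ ringKrullDim A) : ∃ j : Fin m → σ, AlgebraicIndependent k (x ∘ j) := by
  have : Algebra.FiniteType k A := ⟨hx ▸ Subalgebra.fg_def.mpr ⟨_, Set.finite_range x, rfl⟩⟩
  obtain ⟨P, _, le_dim⟩ := exists_isPrime_le_ringKrullDim_quotient hm
  let π := Ideal.Quotient.mkₐ k P
  have adjoin_eq_top : Algebra.adjoin k (Set.range (π ∘ x)) = ⊤ := by
    rw [Set.range_comp, ← AlgHom.map_adjoin, hx, Algebra.map_top, AlgHom.range_eq_top]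
    exact Ideal.Quotient.mkₐ_surjective k P
  have : Algebra.IsAlgebraic (Algebra.adjoin k (Set.range (π ∘ x))) (A ⧸ P) := by
    rw [adjoin_eq_top]
    exact ⟨fun a => isAlgebraic_algebraMap (⟨a, trivial⟩ : (⊤ : Subalgebra k (A ⧸ P)))⟩
  have le_trdeg : m ≤ Algebra.trdeg k (A ⧸ P) :=
    Cardinal.natCast_le_toENat.mp
      (WithBot.coe_le_coe.mp (le_dim.trans (ringKrullDim_le_toENat_trdeg k (A ⧸ P))))
  obtain ⟨j, hj⟩ := exists_algebraicIndependent_comp_of_le_trdeg (π ∘ x) le_trdeg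
  exact ⟨j, AlgebraicIndependent.of_comp π hj⟩

end AlgebraicIndependence

section HomogeneousPolynomials

theorem finrank_homogeneousSubmodule (σ R : Type*) [Fintype σ] [CommRing R] [Nontrivial R]
    (d : ℕ) :
    Module.finrank R (homogeneousSubmodule σ R d) = (Fintype.card σ).multichoose d := by
  classical
  have degree_eq : {m : σ →₀ ℕ | m.degree = d} =
      (Finset.univ.finsuppAntidiag d : Finset (σ →₀ ℕ)) := by
    ext m
    simp [Finsupp.degree_eq_sum]
  rw [homogeneousSubmodule_eq_finsupp_supported, degree_eq]
  exact (Module.finrank_eq_card_basis (basisRestrictSupport R _)).trans (by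
    simp [Finset.card_finsuppAntidiag_nat_eq_multichoose])

theorem map_aeval_comp_homogeneousSubmodule_le {R σ τ A : Type*} [CommSemiring R]
    [CommSemiring A] [Algebra R A] (x : σ → A) (j : τ → σ) (d : ℕ) :
    (homogeneousSubmodule τ R d).map (aeval (x ∘ j)).toLinearMap ≤
      (homogeneousSubmodule σ R d).map (aeval x).toLinearMap := by
  rintro _ ⟨p, hp, rfl⟩
  exact ⟨rename j p, IsHomogeneous.rename_isHomogeneous hp, aeval_rename j x p⟩

theorem multichoose_le_finrank_map_aeval_homogeneousSubmodule {k σ τ A : Type*} [Field k]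
    [CommRing A] [Algebra k A] [Finite σ] [Fintype τ] {x : σ → A} {j : τ → σ}
    (hj : AlgebraicIndependent k (x ∘ j)) (d : ℕ) :
    (Fintype.card τ).multichoose d ≤
      Module.finrank k ((homogeneousSubmodule σ k d).map (aeval x).toLinearMap) := by
  have : Module.Finite k (homogeneousSubmodule σ k d) :=
    Module.Finite.iff_fg.mpr (homogeneousSubmodule_fg σ k d)
  calc (Fintype.card τ).multichoose d
      = Module.finrank k (homogeneousSubmodule τ k d) :=
        (finrank_homogeneousSubmodule τ k d).symm
    _ = Module.finrank k ((homogeneousSubmodule τ k d).map (aeval (x ∘ j)).toLinearMap) :=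
        (Submodule.equivMapOfInjective (aeval (x ∘ j)).toLinearMap hj _).finrank_eq
    _ ≤ Module.finrank k ((homogeneousSubmodule σ k d).map (aeval x).toLinearMap) :=
        Submodule.finrank_mono (map_aeval_comp_homogeneousSubmodule_le x j d)

end HomogeneousPolynomials

theorem finrank_quotient_comap_subtype_ker {R M N : Type*} [Ring R] [AddCommGroup M]
    [AddCommGroup N] [Module R M] [Module R N] (f : M →ₗ[R] N) (p : Submodule R M) :
    Module.finrank R (p ⧸ (LinearMap.ker f).comap p.subtype) = Module.finrank R (p.map f) := by
  rw [← LinearMap.range_domRestrict]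
  exact (f.domRestrict p).quotKerEquivRange.finrank_eq

theorem stmt4_general {k σ : Type*} [Field k] [Finite σ] (I : Ideal (MvPolynomial σ k)) (κ : ℕ)
    (hdim : ((κ + 1 : ℕ) : WithBot ℕ∞) ≤ ringKrullDim (MvPolynomial σ k ⧸ I)) (d : ℕ) :
    (d + κ).choose κ ≤
      Module.finrank k
        (homogeneousSubmodule σ k d ⧸
          (I.restrictScalars k).comap (homogeneousSubmodule σ k d).subtype) := by
  let π := Ideal.Quotient.mkₐ k I
  have aeval_eq : aeval (π ∘ X) = π := (aeval_unique π).symm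
  have adjoin_eq_top : Algebra.adjoin k (Set.range (π ∘ X)) = ⊤ := by
    rw [Algebra.adjoin_range_eq_range_aeval, aeval_eq, AlgHom.range_eq_top]
    exact Ideal.Quotient.mkₐ_surjective k I
  have ker_eq : LinearMap.ker π.toLinearMap = I.restrictScalars k :=
    Submodule.ext fun _ => Ideal.Quotient.eq_zero_iff_mem
  obtain ⟨j, hj⟩ := exists_algebraicIndependent_comp_of_le_ringKrullDim adjoin_eq_top hdim
  have card_le := multichoose_le_finrank_map_aeval_homogeneousSubmodule hj d
  rwa [Fintype.card_fin, Nat.multichoose_eq, Nat.add_right_comm, Nat.add_sub_cancel,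
    Nat.add_comm κ d, Nat.choose_symm_add, aeval_eq, ← finrank_quotient_comap_subtype_ker,
    ker_eq] at card_le

/-- Let `I` be a homogeneous prime ideal of `R = k[x_0, …, x_n]` (homogeneity stated as:
`I` contains all homogeneous components of each of its elements) such that the Krull
dimension of `R/I` is `κ+1`.  Then for every `d ≥ 0`, the degree-`d` graded piece of
`R/I` has `k`-dimension at least `binom(d+κ, κ)`; equivalently, the subspace of degree-`d`
homogeneous polynomials lying in `I` has codimension at least `binom(d+κ, κ)` in the
space of all degree-`d` homogeneous polynomials.  The codimension is expressed as the
`finrank` of the quotient of the degree-`d` homogeneous piece of `R` by the subspace of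
elements of `I`. -/
theorem stmt4 (k : Type) [Field k] [IsAlgClosed k] (n : ℕ) (hn : 1 ≤ n)
    (I : Ideal (MvPolynomial (Fin (n+1)) k)) (hprime : I.IsPrime)
    (hhom : ∀ f ∈ I, ∀ i : ℕ, MvPolynomial.homogeneousComponent i f ∈ I)
    (κ : ℕ)
    (hdim : ringKrullDim (MvPolynomial (Fin (n+1)) k ⧸ I) = ((κ+1 : ℕ) : WithBot (WithTop ℕ)))
    (d : ℕ) :
    (d + κ).choose κ ≤
      Module.finrank k
        ((MvPolynomial.homogeneousSubmodule (Fin (n+1)) k d) ⧸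
          (Submodule.comap (MvPolynomial.homogeneousSubmodule (Fin (n+1)) k d).subtype
            (Submodule.restrictScalars k I))) := by
  exact stmt4_general I κ hdim.ge d
end

section
/- Let k be a field of characteristic 0 and let n ≥ 2, d ≥ 1 be integers. Inside the binom(n+d, n)-dimensional k-vector space of homogeneous degree-d polynomials F in x_0,…,x_n, the subset W = {F : (∂F/∂x_i)(a,0,…,0,b) = 0 for all i = 0,…,n and all a,b ∈ k} of polynomials whose zero locus is singular along the line x_1 = ⋯ = x_{n−1} = 0 is a k-linear subspace of codimension exactly nd+1. -/
/-!
Let `s` be a set of coordinates, `F` a form of degree `d + 1`. Over an infinite domain `∂F/∂xᵢ`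
vanishes on the coordinate subspace spanned by `s` iff it has no monomial in the variables from `s`
alone. For `i ∉ s` this kills the coefficients of `F` at `xᵢ` times a monomial of degree `d` in `s`.
The conditions for `i ∈ s` together kill, by Euler's relation and since `d + 1 ≠ 0`, the
coefficients at the monomials of degree `d + 1` in `s`. So the codimension is the number of these
monomials, which for `s = {0, n}` is `(d + 2) + (n - 1) (d + 1) = n (d + 1) + 1`.
-/

open MvPolynomial

/-- The point `(a, 0, …, 0, b)` of the line `x_1 = ⋯ = x_{n-1} = 0` in `k^{n+1}`. -/
def linePt {k : Type} [Field k] (n : ℕ) (a b : k) : Fin (n+1) → k :=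
  fun l => if l = 0 then a else if l = Fin.last n then b else 0

section Evaluation

variable {R σ ι : Type*}

theorem eval_killCompl [CommSemiring R] {f : ι → σ} (hf : Function.Injective f) (y : ι → R)
    (F : MvPolynomial σ R) : eval y (killCompl hf F) = eval (Function.extend f y 0) F := by
  suffices h : (aeval y).comp (killCompl hf) = aeval (R := R) (Function.extend f y 0) from
    DFunLike.congr_fun h F
  ext i
  by_cases hi : i ∈ Set.range f
  · obtain ⟨j, rfl⟩ := hi
    simp [killCompl, hf.extend_apply]
  · simp [killCompl, hi, Function.extend_apply' _ _ _ hi]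

theorem extend_subtype_val_of_support_subset [Zero R] {s : Finset σ} {x : σ → R}
    (hx : Function.support x ⊆ s) :
    Function.extend ((↑) : s → σ) (fun j => x j) 0 = x := by
  ext i
  by_cases hi : i ∈ s
  · exact Subtype.val_injective.extend_apply _ _ (⟨i, hi⟩ : s)
  · rw [Function.extend_apply' _ _ _ (by simpa using hi)]
    exact (Function.notMem_support.mp fun h => hi (hx h)).symm

theorem forall_eval_eq_zero_iff_forall_coeff_eq_zero [CommRing R] [IsDomain R] [Infinite R]
    (s : Finset σ) (F : MvPolynomial σ R) :
    (∀ x : σ → R, Function.support x ⊆ s → eval x F = 0) ↔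
      ∀ m : σ →₀ ℕ, m.support ⊆ s → coeff m F = 0 := by
  have hs : Function.Injective ((↑) : s → σ) := Subtype.val_injective
  calc (∀ x : σ → R, Function.support x ⊆ s → eval x F = 0)
    _ ↔ ∀ y : s → R, eval y (killCompl hs F) = 0 := by
      simp only [eval_killCompl]
      refine ⟨fun h y => h _ fun i hi => ?_, fun h x hx => ?_⟩
      · by_contra his
        exact hi (Function.extend_apply' _ _ _ (by simpa using his))
      · rw [← extend_subtype_val_of_support_subset hx]
        exact h _
    _ ↔ killCompl hs F = 0 := by simp only [MvPolynomial.funext_iff, map_zero]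
    _ ↔ ∀ m : s →₀ ℕ, coeff (m.mapDomain (↑)) F = 0 := by
      simp only [MvPolynomial.ext_iff, coeff_killCompl, coeff_zero]
    _ ↔ ∀ m : σ →₀ ℕ, m.support ⊆ s → coeff m F = 0 := by
      classical
      refine ⟨fun h m hm => ?_, fun h m => h _ fun i hi => ?_⟩
      · rw [← Finsupp.mapDomain_comapDomain _ hs m (by simpa using hm)]
        exact h _
      · obtain ⟨j, -, rfl⟩ := Finset.mem_image.mp (Finsupp.mapDomain_support hi)
        exact j.2

end Evaluation

section Exponents

variable {σ : Type*} [DecidableEq σ]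

theorem mem_finsuppAntidiag_iff_degree {s : Finset σ} {d : ℕ} {m : σ →₀ ℕ} :
    m ∈ s.finsuppAntidiag d ↔ m.degree = d ∧ m.support ⊆ s :=
  Finset.mem_finsuppAntidiag'

theorem apply_eq_zero_of_mem_finsuppAntidiag {s : Finset σ} {d : ℕ} {m : σ →₀ ℕ}
    (hm : m ∈ s.finsuppAntidiag d) {i : σ} (hi : i ∉ s) : m i = 0 :=
  Finsupp.notMem_support_iff.mp fun h => hi ((mem_finsuppAntidiag_iff_degree.mp hm).2 h)

variable [Fintype σ]

/-- The exponents of the monomials of degree `d + 1` that have degree at most one in the variables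
outside `s`; the corresponding coefficients of a form make up its first-order jet along the
coordinate subspace spanned by `s`. -/
noncomputable def jetExponents (s : Finset σ) (d : ℕ) : Finset (σ →₀ ℕ) :=
  s.finsuppAntidiag (d + 1) ∪
    sᶜ.biUnion fun i => (s.finsuppAntidiag d).map (addRightEmbedding (Finsupp.single i 1))

theorem mem_jetExponents {s : Finset σ} {d : ℕ} {m : σ →₀ ℕ} :
    m ∈ jetExponents s d ↔ m ∈ s.finsuppAntidiag (d + 1) ∨
      ∃ i ∉ s, ∃ l ∈ s.finsuppAntidiag d, l + Finsupp.single i 1 = m := by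
  simp only [jetExponents, Finset.mem_union, Finset.mem_biUnion, Finset.mem_compl, Finset.mem_map,
    addRightEmbedding_apply]

theorem degree_of_mem_jetExponents {s : Finset σ} {d : ℕ} {m : σ →₀ ℕ}
    (hm : m ∈ jetExponents s d) : m.degree = d + 1 := by
  obtain hm | ⟨i, -, l, hl, rfl⟩ := mem_jetExponents.mp hm
  · exact (mem_finsuppAntidiag_iff_degree.mp hm).1
  · rw [map_add, Finsupp.degree_single, (mem_finsuppAntidiag_iff_degree.mp hl).1]

theorem card_jetExponents (s : Finset σ) (d : ℕ) :
    (jetExponents s d).card =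
      s.card.multichoose (d + 1) + sᶜ.card * s.card.multichoose d := by
  have hdisj : Disjoint (s.finsuppAntidiag (d + 1)) (sᶜ.biUnion fun i =>
      (s.finsuppAntidiag d).map (addRightEmbedding (Finsupp.single i 1))) := by
    simp only [Finset.disjoint_left, Finset.mem_biUnion, Finset.mem_compl, Finset.mem_map,
      addRightEmbedding_apply]
    rintro _ hm ⟨i, hi, l, -, rfl⟩
    simpa using apply_eq_zero_of_mem_finsuppAntidiag hm hi
  have hpairwise : (sᶜ : Set σ).PairwiseDisjoint fun i =>
      (s.finsuppAntidiag d).map (addRightEmbedding (Finsupp.single i 1)) := by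
    intro i hi j _ hij
    simp only [Function.onFun, Finset.disjoint_left, Finset.mem_map, addRightEmbedding_apply]
    rintro _ ⟨l, -, rfl⟩ ⟨l', hl', h⟩
    have hi' : l' i = l i + 1 := by simpa [hij] using DFunLike.congr_fun h i
    rw [apply_eq_zero_of_mem_finsuppAntidiag hl' hi] at hi'
    omega
  rw [jetExponents, Finset.card_union_of_disjoint hdisj,
    Finset.card_biUnion (by simpa using hpairwise)]
  simp only [Finset.card_map, Finset.card_finsuppAntidiag_nat_eq_multichoose, Finset.sum_const,
    smul_eq_mul]

end Exponents

section Coefficients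

variable {R σ : Type*} [CommSemiring R]

theorem sum_coeff_sub_single_pderiv (m : σ →₀ ℕ) (F : MvPolynomial σ R) :
    ∑ i ∈ m.support, coeff (m - Finsupp.single i 1) (pderiv i F) = m.degree * coeff m F := by
  rw [Finsupp.degree_apply, Nat.cast_sum, Finset.sum_mul]
  refine Finset.sum_congr rfl fun i hi => ?_
  have hmi : 1 ≤ m i := Nat.one_le_iff_ne_zero.mpr (Finsupp.mem_support_iff.mp hi)
  have hsub : m - Finsupp.single i 1 + Finsupp.single i 1 = m :=
    tsub_add_cancel_of_le (Finsupp.single_le_iff.mpr hmi)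
  have happly : (m - Finsupp.single i 1 : σ →₀ ℕ) i + 1 = m i := by
    simpa using DFunLike.congr_fun hsub i
  rw [coeff_pderiv, hsub, mul_comm, ← Nat.cast_add_one, happly]

/-- The map sending a form of degree `d` to the family of its coefficients at the exponents
in `S`. -/
noncomputable def homogeneousCoeffs (d : ℕ) (S : Finset (σ →₀ ℕ)) :
    homogeneousSubmodule σ R d →ₗ[R] (S → R) :=
  LinearMap.pi fun m => lcoeff R m.1 ∘ₗ Submodule.subtype _

theorem mem_ker_homogeneousCoeffs {d : ℕ} {S : Finset (σ →₀ ℕ)}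
    {F : homogeneousSubmodule σ R d} :
    F ∈ LinearMap.ker (homogeneousCoeffs d S) ↔
      ∀ m ∈ S, coeff m (F : MvPolynomial σ R) = 0 := by
  simp [homogeneousCoeffs, funext_iff]

theorem homogeneousCoeffs_surjective {d : ℕ} {S : Finset (σ →₀ ℕ)}
    (hS : ∀ m ∈ S, m.degree = d) :
    Function.Surjective (homogeneousCoeffs (R := R) d S) := by
  classical
  intro c
  have hF : ∑ m : S, monomial m.1 (c m) ∈ homogeneousSubmodule σ R d :=
    Submodule.sum_mem _ fun m _ => isHomogeneous_monomial _ (hS m m.2)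
  refine ⟨⟨_, hF⟩, ?_⟩
  ext m
  simp [homogeneousCoeffs, coeff_monomial]

theorem finrank_quotient_ker_homogeneousCoeffs {R : Type*} [CommRing R] [Nontrivial R] {d : ℕ}
    {S : Finset (σ →₀ ℕ)} (hS : ∀ m ∈ S, m.degree = d) :
    Module.finrank R (homogeneousSubmodule σ R d ⧸
      LinearMap.ker (homogeneousCoeffs (R := R) d S)) = S.card := by
  have e := (homogeneousCoeffs (R := R) d S).quotKerEquivOfSurjective
    (homogeneousCoeffs_surjective hS)
  exact e.finrank_eq.trans (by rw [Module.finrank_fintype_fun_eq_card, Fintype.card_coe])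

end Coefficients

section SingularAlong

variable {R σ : Type*}

variable (R) in
/-- The forms of degree `d` that are singular along the coordinate subspace spanned by `s`: all
partial derivatives vanish at the points of that subspace, which are those with support in `s`. -/
noncomputable def singularAlong [CommSemiring R] (s : Finset σ) (d : ℕ) :
    Submodule R (homogeneousSubmodule σ R d) where
  carrier := {F | ∀ (i : σ) (x : σ → R), Function.support x ⊆ s →
    eval x (pderiv i (F : MvPolynomial σ R)) = 0}
  zero_mem' i x _ := by simp
  add_mem' hF hG i x hx := by simp [hF i x hx, hG i x hx]
  smul_mem' c F hF i x hx := by simp [hF i x hx]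

theorem mem_singularAlong [CommSemiring R] {s : Finset σ} {d : ℕ}
    {F : homogeneousSubmodule σ R d} :
    F ∈ singularAlong R s d ↔ ∀ (i : σ) (x : σ → R), Function.support x ⊆ s →
      eval x (pderiv i (F : MvPolynomial σ R)) = 0 :=
  Iff.rfl

variable [CommRing R] [IsDomain R] [Infinite R]

theorem mem_singularAlong_iff_coeff_pderiv {s : Finset σ} {d : ℕ}
    {F : homogeneousSubmodule σ R d} :
    F ∈ singularAlong R s d ↔ ∀ (i : σ) (m : σ →₀ ℕ), m.support ⊆ s →
      coeff m (pderiv i (F : MvPolynomial σ R)) = 0 := by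
  simp only [mem_singularAlong, forall_eval_eq_zero_iff_forall_coeff_eq_zero]

variable [Fintype σ] [DecidableEq σ]

theorem ker_homogeneousCoeffs_le_singularAlong (s : Finset σ) (d : ℕ) :
    LinearMap.ker (homogeneousCoeffs (d + 1) (jetExponents s d)) ≤ singularAlong R s (d + 1) := by
  intro F hF
  rw [mem_ker_homogeneousCoeffs] at hF
  rw [mem_singularAlong_iff_coeff_pderiv]
  intro i m hm
  by_cases hdeg : m.degree = d
  · suffices h : m + Finsupp.single i 1 ∈ jetExponents s d by
      rw [coeff_pderiv, hF _ h, zero_mul]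
    rw [mem_jetExponents]
    by_cases hi : i ∈ s
    · refine .inl (mem_finsuppAntidiag_iff_degree.mpr ⟨by simp [hdeg], ?_⟩)
      exact Finsupp.support_add.trans (Finset.union_subset hm
        (Finsupp.support_single_subset.trans (Finset.singleton_subset_iff.mpr hi)))
    · exact .inr ⟨i, hi, m, mem_finsuppAntidiag_iff_degree.mpr ⟨hdeg, hm⟩, rfl⟩
  · exact (IsHomogeneous.pderiv F.2).coeff_eq_zero hdeg

theorem singularAlong_le_ker_homogeneousCoeffs (s : Finset σ) {d : ℕ}
    (hd : ((d + 1 : ℕ) : R) ≠ 0) :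
    singularAlong R s (d + 1) ≤ LinearMap.ker (homogeneousCoeffs (d + 1) (jetExponents s d)) := by
  intro F hF
  rw [mem_singularAlong_iff_coeff_pderiv] at hF
  rw [mem_ker_homogeneousCoeffs]
  intro m hm
  obtain hm | ⟨i, hi, l, hl, rfl⟩ := mem_jetExponents.mp hm
  · obtain ⟨hdeg, hms⟩ := mem_finsuppAntidiag_iff_degree.mp hm
    have euler := sum_coeff_sub_single_pderiv m (F : MvPolynomial σ R)
    rw [Finset.sum_eq_zero fun i _ => hF i _ (Finsupp.support_tsub.trans hms), hdeg] at euler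
    exact (mul_eq_zero.mp euler.symm).resolve_left hd
  · have hcoeff := hF i l (mem_finsuppAntidiag_iff_degree.mp hl).2
    rwa [coeff_pderiv, apply_eq_zero_of_mem_finsuppAntidiag hl hi, Nat.cast_zero, zero_add,
      mul_one] at hcoeff

theorem finrank_quotient_singularAlong (s : Finset σ) {d : ℕ} (hd : ((d + 1 : ℕ) : R) ≠ 0) :
    Module.finrank R (homogeneousSubmodule σ R (d + 1) ⧸ singularAlong R s (d + 1)) =
      s.card.multichoose (d + 1) + sᶜ.card * s.card.multichoose d := by
  rw [(singularAlong_le_ker_homogeneousCoeffs s hd).antisymm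
      (ker_homogeneousCoeffs_le_singularAlong s d),
    finrank_quotient_ker_homogeneousCoeffs fun _ => degree_of_mem_jetExponents,
    card_jetExponents]

end SingularAlong

section Line

variable {k : Type} [Field k]

theorem support_subset_pair_iff_exists_eq_linePt {n : ℕ} (hn : 0 < n) (x : Fin (n + 1) → k) :
    Function.support x ⊆ ({0, Fin.last n} : Finset (Fin (n + 1))) ↔
      ∃ a b, x = linePt n a b := by
  have hlast : Fin.last n ≠ 0 := by simpa [Fin.ext_iff] using hn.ne'
  constructor
  · refine fun hx => ⟨x 0, x (Fin.last n), ?_⟩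
    ext i
    by_cases h0 : i = 0
    · simp [linePt, h0]
    by_cases hi : i = Fin.last n
    · simp [linePt, hi, hlast]
    · have hxi : x i = 0 := Function.notMem_support.mp fun h => by simpa [h0, hi] using hx h
      simp [linePt, h0, hi, hxi]
  · rintro ⟨a, b, rfl⟩ i hi
    by_contra his
    simp_all [linePt]

theorem mem_singularAlong_pair_iff {n d : ℕ} (hn : 0 < n)
    (F : homogeneousSubmodule (Fin (n + 1)) k d) :
    F ∈ singularAlong k {0, Fin.last n} d ↔ ∀ (i : Fin (n + 1)) (a b : k),
      eval (linePt n a b) (pderiv i (F : MvPolynomial (Fin (n + 1)) k)) = 0 := by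
  simp only [mem_singularAlong, support_subset_pair_iff_exists_eq_linePt hn]
  exact ⟨fun h i a b => h i _ ⟨a, b, rfl⟩, fun h i _ ⟨a, b, hx⟩ => hx ▸ h i a b⟩

end Line

theorem stmt5_general (k : Type) [Field k] [Infinite k] (n d : ℕ) (hn : 0 < n)
    (hd : (d : k) ≠ 0) :
    ∃ W : Submodule k (homogeneousSubmodule (Fin (n + 1)) k d),
      (∀ F : homogeneousSubmodule (Fin (n + 1)) k d,
        F ∈ W ↔ ∀ (i : Fin (n + 1)) (a b : k),
          eval (linePt n a b) (pderiv i (F : MvPolynomial (Fin (n + 1)) k)) = 0) ∧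
      Module.finrank k (homogeneousSubmodule (Fin (n + 1)) k d ⧸ W) = n * d + 1 := by
  refine ⟨singularAlong k {0, Fin.last n} d, mem_singularAlong_pair_iff hn, ?_⟩
  obtain ⟨e, rfl⟩ : ∃ e, d = e + 1 := Nat.exists_eq_succ_of_ne_zero (by rintro rfl; simp at hd)
  obtain ⟨m, rfl⟩ : ∃ m, n = m + 1 := Nat.exists_eq_succ_of_ne_zero hn.ne'
  have hcard : ({0, Fin.last (m + 1)} : Finset (Fin (m + 2))).card = 2 :=
    Finset.card_pair Fin.last_pos.ne
  have hcompl : ({0, Fin.last (m + 1)} : Finset (Fin (m + 2)))ᶜ.card = m := by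
    rw [Finset.card_compl, hcard, Fintype.card_fin, Nat.add_sub_cancel]
  rw [finrank_quotient_singularAlong _ hd, hcard, hcompl, Nat.multichoose_two,
    Nat.multichoose_two]
  ring

/-- Inside the space of homogeneous degree-`d` polynomials in `x_0, …, x_n` (over a field
of characteristic zero, with `n ≥ 2`, `d ≥ 1`), the set of `F` whose zero locus is
singular along the line `x_1 = ⋯ = x_{n-1} = 0`, i.e. such that all partial derivatives
`∂F/∂x_i` vanish at every point `(a,0,…,0,b)`, is a `k`-linear subspace of codimension
exactly `nd+1`. -/
theorem stmt5 (k : Type) [Field k] [CharZero k] (n d : ℕ) (hn : 2 ≤ n) (hd : 1 ≤ d) :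
    ∃ W : Submodule k (MvPolynomial.homogeneousSubmodule (Fin (n+1)) k d),
      (∀ F : MvPolynomial.homogeneousSubmodule (Fin (n+1)) k d,
        F ∈ W ↔ ∀ (i : Fin (n+1)) (a b : k),
          eval (linePt n a b) (pderiv i (F : MvPolynomial (Fin (n+1)) k)) = 0) ∧
      Module.finrank k ((MvPolynomial.homogeneousSubmodule (Fin (n+1)) k d) ⧸ W) =
        n * d + 1 :=
  stmt5_general k n d (by omega) (Nat.cast_ne_zero.mpr (by omega))
end

section
/- Let n, d be integers with n+1 ≤ 2d and d ≤ n−2, and let e be a real number with 1 ≤ e and e(n−d+1) ≤ n+1. Then n(n−1) − 4en + e(e+1)(n−d+1) + 2d − 2e + 2 > 0. -/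
/-!
As a function of `e`, twice the codimension bound is a quadratic which decreases up to the threshold
degree `(n + 1) / (n - d + 1)`, so it suffices to bound its value there. With `m = n + 1` and
`k = n - d + 1` that value is `((k - 3) m² + 2 m + 4 k - 2 k²) / k`. The hypotheses on `d` say that
`3 ≤ k` and `2 k ≤ m`, and inserting `m ≥ 2 k` bounds the numerator below by
`2 k (2 k² - 7 k + 4) > 0`.
-/

section SharpLocus

variable {K : Type*} [Field K]

/-- Twice the lower bound `n.choose 2 + d - 2en + (e(e + 1)/2)(n - d + 1) - e + 1` for the
codimension of the locus of `e`-sharp or `e`-uneven hypersurfaces of degree `d` in `ℙⁿ`; the factor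
two clears denominators, and the parameters are field elements because the threshold degree at which
the bound is evaluated need not be an integer. -/
def twiceCodimBound (n d e : K) : K :=
  n * (n - 1) - 4 * e * n + e * (e + 1) * (n - d + 1) + 2 * d - 2 * e + 2

/-- The threshold degree `(n + 1) / (n - d + 1)`, the largest `e` for which the codimension of the
`e`-sharp or `e`-uneven locus is estimated; meaningful only for `d ≠ n + 1`. -/
def thresholdDegree (n d : K) : K :=
  (n + 1) / (n - d + 1)

theorem twiceCodimBound_sub (n d e f : K) :
    twiceCodimBound n d e - twiceCodimBound n d f =
      (f - e) * (4 * n + 2 - (e + f + 1) * (n - d + 1)) := by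
  unfold twiceCodimBound
  ring

theorem twiceCodimBound_thresholdDegree {n d : K} (hk : n - d + 1 ≠ 0) :
    twiceCodimBound n d (thresholdDegree n d) =
      ((n - d + 1 - 3) * (n + 1) ^ 2 + 2 * (n + 1) + 4 * (n - d + 1) - 2 * (n - d + 1) ^ 2) /
        (n - d + 1) := by
  unfold twiceCodimBound thresholdDegree
  field_simp
  ring

variable [LinearOrder K] [IsStrictOrderedRing K]

theorem antitoneOn_twiceCodimBound {n d : K} (hk : 0 < n - d + 1) (hnd : 1 ≤ n + d) :
    AntitoneOn (twiceCodimBound n d) (Set.Iic (thresholdDegree n d)) := by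
  intro e he f hf hef
  have he' : e * (n - d + 1) ≤ n + 1 := (le_div_iff₀ hk).mp he
  have hf' : f * (n - d + 1) ≤ n + 1 := (le_div_iff₀ hk).mp hf
  have hslope : 0 ≤ 4 * n + 2 - (e + f + 1) * (n - d + 1) := by linarith
  rw [← sub_nonneg, twiceCodimBound_sub]
  exact mul_nonneg (sub_nonneg.mpr hef) hslope

theorem threshold_numerator_pos {k m : K} (hk : 3 ≤ k) (hkm : 2 * k ≤ m) :
    0 < (k - 3) * m ^ 2 + 2 * m + 4 * k - 2 * k ^ 2 := by
  have hk0 : 0 < k := by linarith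
  have hquad : 0 < 2 * k ^ 2 - 7 * k + 4 := by nlinarith
  calc
    0 < 2 * k * (2 * k ^ 2 - 7 * k + 4) := mul_pos (mul_pos two_pos hk0) hquad
    _ = (k - 3) * (2 * k) ^ 2 + 2 * (2 * k) + 4 * k - 2 * k ^ 2 := by ring
    _ ≤ (k - 3) * m ^ 2 + 2 * m + 4 * k - 2 * k ^ 2 := by
      have : 0 ≤ k - 3 := sub_nonneg.mpr hk
      gcongr

theorem twiceCodimBound_thresholdDegree_pos {n d : K} (hnd : n + 1 ≤ 2 * d) (hdn : d ≤ n - 2) :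
    0 < twiceCodimBound n d (thresholdDegree n d) := by
  have hk : 0 < n - d + 1 := by linarith
  rw [twiceCodimBound_thresholdDegree hk.ne']
  exact div_pos (threshold_numerator_pos (by linarith) (by linarith)) hk

theorem stmt15_general {n d e : K} (hnd : n + 1 ≤ 2 * d) (hdn : d ≤ n - 2)
    (he : e * (n - d + 1) ≤ n + 1) :
    0 < n * (n - 1) - 4 * e * n + e * (e + 1) * (n - d + 1) + 2 * d - 2 * e + 2 := by
  have hk : 0 < n - d + 1 := by linarith
  have he' : e ≤ thresholdDegree n d := (le_div_iff₀ hk).mpr he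
  calc
    0 < twiceCodimBound n d (thresholdDegree n d) := twiceCodimBound_thresholdDegree_pos hnd hdn
    _ ≤ twiceCodimBound n d e :=
      antitoneOn_twiceCodimBound hk (by linarith) he' Set.self_mem_Iic he'

end SharpLocus

/-- The final arithmetic estimate: for integers `n, d` with `(n+1)/2 ≤ d ≤ n-2` and a
real number `e` with `1 ≤ e` and `e(n-d+1) ≤ n+1` (i.e. `e` at most the threshold
degree), one has `n(n-1) - 4en + e(e+1)(n-d+1) + 2d - 2e + 2 > 0`. -/
theorem stmt15 (n d : ℤ) (e : ℝ) (h1 : n + 1 ≤ 2*d) (h2 : d ≤ n - 2)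
    (h3 : 1 ≤ e) (h4 : e * ((n : ℝ) - (d : ℝ) + 1) ≤ (n : ℝ) + 1) :
    (n : ℝ) * ((n : ℝ) - 1) - 4*e*(n : ℝ) + e*(e+1)*((n : ℝ) - (d : ℝ) + 1)
      + 2*(d : ℝ) - 2*e + 2 > 0 :=
  stmt15_general (by exact_mod_cast h1) (by exact_mod_cast h2) h4
end
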